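/- The free Tortkara algebra T({x,y}) on two generators is special: the natural homomorphism T({x,y}) → ST({x,y}) sending x ↦ x and y ↦ y is an isomorphism of algebras; in particular T({x,y}) embeds into A^(−) for a Zinbiel algebra A. -/

import Mathlib

/-- Nonempty words in the alphabet `X`. -/
def Word (X : Type) : Type := {l : List X // l ≠ []}

/-- The underlying vector space of the free Zinbiel algebra on `X` over `K`:
the space with basis the nonempty words in `X`. -/
abbrev Zin (K X : Type) [Field K] : Type := Word X →₀ K

/-- All shuffles (interleavings) of two words. -/
def shuffles {X : Type} : List X → List X → List (List X)
  | [], l => [l]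
  | a :: as, [] => [a :: as]
  | a :: as, b :: bs =>
      ((shuffles as (b :: bs)).map fun w => a :: w) ++
        ((shuffles (a :: as) bs).map fun w => b :: w)
  termination_by l₁ l₂ => l₁.length + l₂.length

/-- The basis vector of `Zin K X` corresponding to a word (`0` for the empty word). -/
noncomputable def ofList {K X : Type} [Field K] : List X → Zin K X
  | [] => 0
  | a :: t => Finsupp.single ⟨a :: t, by simp⟩ 1

/-- Sum of the basis vectors of a list of words. -/
noncomputable def ofLists {K X : Type} [Field K] (ls : List (List X)) : Zin K X :=
  (ls.map (ofList (K := K))).sum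

/-- The letter `x` as an element of `Zin K X`. -/
noncomputable def ofLetter {K X : Type} [Field K] (x : X) : Zin K X :=
  Finsupp.single ⟨[x], by simp⟩ 1

/-- The Zinbiel product on `Zin K X`, defined on basis words by
`u ∘ (v ++ [y]) = (u ⧢ v) ++ [y]` and extended bilinearly. -/
noncomputable def zmul {K X : Type} [Field K] (f g : Zin K X) : Zin K X :=
  f.sum fun u cu => g.sum fun w cw =>
    (cu * cw) • ofLists ((shuffles u.1 w.1.dropLast).map fun s => s ++ [w.1.getLast w.2])

/-- The shuffle product on `Zin K X`, extended bilinearly from words. -/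
noncomputable def shMul {K X : Type} [Field K] (f g : Zin K X) : Zin K X :=
  f.sum fun u cu => g.sum fun w cw => (cu * cw) • ofLists (shuffles u.1 w.1)

/-- The commutator `[f,g] = f∘g - g∘f` in `Zin K X`. -/
noncomputable def zbracket {K X : Type} [Field K] (f g : Zin K X) : Zin K X :=
  zmul f g - zmul g f

/-- The anticommutator `{f,g} = f∘g + g∘f` in `Zin K X`. -/
noncomputable def jprod {K X : Type} [Field K] (f g : Zin K X) : Zin K X :=
  zmul f g + zmul g f

/-- Swap the last two letters of a word (identity on shorter words). -/
def swapLast {X : Type} (l : List X) : List X :=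
  match l.reverse with
  | z :: y :: t => (y :: z :: t).reverse
  | _ => l

/-- The linear map `p : Zin(X) → Zin(X)`: `p(x) = -x` on letters, and `p` swaps
the last two letters of a word of length ≥ 2. -/
noncomputable def pMap {K X : Type} [Field K] (f : Zin K X) : Zin K X :=
  f.sum fun w c =>
    c • (if w.1.length = 1 then -(Finsupp.single w (1 : K)) else ofList (swapLast w.1))

/-- `bar f = f - p(f)`. -/
noncomputable def bar {K X : Type} [Field K] (f : Zin K X) : Zin K X := f - pMap f

/-- The skew element `\bar{w} = w - p(w)` associated to a word `w`. -/
noncomputable def skew {K X : Type} [Field K] (w : Word X) : Zin K X :=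
  bar (Finsupp.single w 1)

/-- Membership in `ST(X)`, the subalgebra of `(Zin(X), [·,·])` generated by the
letters: the free special Tortkara algebra on `X`. -/
inductive InST {K X : Type} [Field K] : Zin K X → Prop
  | letter (x : X) : InST (ofLetter x)
  | zero : InST 0
  | add {f g : Zin K X} : InST f → InST g → InST (f + g)
  | smul (c : K) {f : Zin K X} : InST f → InST (c • f)
  | bracket {f g : Zin K X} : InST f → InST g → InST (zbracket f g)

/-- Membership in `J(X)`, the subalgebra of `(Zin(X), {·,·})` generated by the
letters: the Jordan elements of `Zin(X)`. -/
inductive InJ {K X : Type} [Field K] : Zin K X → Prop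
  | letter (x : X) : InJ (ofLetter x)
  | zero : InJ 0
  | add {f g : Zin K X} : InJ f → InJ g → InJ (f + g)
  | smul (c : K) {f : Zin K X} : InJ f → InJ (c • f)
  | jmul {f g : Zin K X} : InJ f → InJ g → InJ (jprod f g)

/-- The left-normed anticommutator `{{⋯{x₁,x₂}⋯},xₙ}` of the letters of a word. -/
noncomputable def dynkinWord {K X : Type} [Field K] : List X → Zin K X
  | [] => 0
  | x :: xs => xs.foldl (fun acc y => jprod acc (ofLetter y)) (ofLetter x)

/-- The Dynkin map `D : Zin(X) → Zin(X)`. -/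
noncomputable def dynkin {K X : Type} [Field K] (f : Zin K X) : Zin K X :=
  f.sum fun w c => c • dynkinWord w.1


/-- A bundled Zinbiel algebra over `K`: a nonunital nonassociative `K`-algebra whose
product satisfies the Zinbiel identity `a∘(b∘c) = (a∘b + b∘a)∘c`. -/
structure ZinbielAlgebra (K : Type) [Field K] : Type 1 where
  carrier : Type
  [ring : NonUnitalNonAssocRing carrier]
  [mod : Module K carrier]
  [smulComm : SMulCommClass K carrier carrier]
  [tower : IsScalarTower K carrier carrier]
  zinbiel : ∀ a b c : carrier, a * (b * c) = (a * b + b * a) * c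

attribute [instance] ZinbielAlgebra.ring ZinbielAlgebra.mod
  ZinbielAlgebra.smulComm ZinbielAlgebra.tower

/-- A bundled Tortkara algebra over `K`: an anticommutative nonunital nonassociative
`K`-algebra satisfying `(ab)(cb) = J(a,b,c)b`, where `J(a,b,c) = (ab)c+(bc)a+(ca)b`. -/
structure TortkaraAlgebra (K : Type) [Field K] : Type 1 where
  carrier : Type
  [ring : NonUnitalNonAssocRing carrier]
  [mod : Module K carrier]
  [smulComm : SMulCommClass K carrier carrier]
  [tower : IsScalarTower K carrier carrier]
  anticomm : ∀ a b : carrier, a * b = -(b * a)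
  tortkara : ∀ a b c : carrier,
    (a * b) * (c * b) = ((a * b) * c + (b * c) * a + (c * a) * b) * b

attribute [instance] TortkaraAlgebra.ring TortkaraAlgebra.mod
  TortkaraAlgebra.smulComm TortkaraAlgebra.tower

/-!
Let a Tortkara algebra be generated by `x` and `y`. Linearising the Tortkara identity gives
`(ae)(cd) = (ed)(ca) - J(e,a,c)d + aJ(e,d,c)`. Since `ed` is a multiple of `xy`, induction on the
degree shows that every element is a combination of `x`, `y` and the left-normed products of
`xy` by a word in `x` and `y`.

In the free Zinbiel algebra, where the product `≺` of words keeps the last letter of its right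
factor last, right bracketing by a letter `c` sends a skew element `uxy - uyx` to the skew
element of `-(uc + u ⧢ c)`. Hence the left-normed product belonging to the word `w` becomes the
skew element of `twist w`, and it is enough to see that `twist` is injective. Writing `B` for the
operator that shuffles the last letter of a word back in, `twist` is built recursively from `1 + B`.
From `B (c ⧢ f) = c ⧢ (1 + B) f` one finds that `B (B - 1) ⋯ (B - n)` kills the words of length at
most `n`. So the eigenvalues of `B` are natural numbers, `-1` is not among them in characteristic
zero, and `1 + B` is injective.
-/

/-- The vector space with basis all words in the alphabet `X`. Unlike `Zin K X` it contains the
empty word, the unit of the shuffle product and the starting point of recursions on words. -/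
abbrev WordSpace (R X : Type*) [CommSemiring R] : Type _ := List X →₀ R

namespace WordSpace

variable {R : Type*} [CommSemiring R] {X : Type*} {M : Type*} [AddCommMonoid M] [Module R M]

/-- The basis vector of a word. -/
noncomputable abbrev word (R : Type*) [CommSemiring R] {X : Type*} (l : List X) : WordSpace R X :=
  Finsupp.single l 1

/-- Prepending a letter to every word. -/
noncomputable def cons (c : X) : WordSpace R X →ₗ[R] WordSpace R X :=
  Finsupp.linearCombination R fun l => word R (c :: l)

/-- Appending a letter to every word. -/
noncomputable def snoc (c : X) : WordSpace R X →ₗ[R] WordSpace R X :=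
  Finsupp.linearCombination R fun l => word R (l ++ [c])

theorem cons_word (c : X) (l : List X) : cons c (word R l) = word R (c :: l) := by simp [cons]

theorem snoc_word (c : X) (l : List X) : snoc c (word R l) = word R (l ++ [c]) := by simp [snoc]

theorem word_singleton (c : X) : word R [c] = snoc c (word R []) := by simp [snoc_word]

theorem snoc_cons (a b : X) (f : WordSpace R X) : snoc b (cons a f) = cons a (snoc b f) := by
  suffices snoc b ∘ₗ cons a = cons a ∘ₗ snoc b from LinearMap.congr_fun this f
  ext l : 2
  simp [cons_word, snoc_word]

theorem hom_ext {f g : WordSpace R X →ₗ[R] M} (h : ∀ l, f (word R l) = g (word R l)) : f = g :=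
  Finsupp.lhom_ext' fun l => LinearMap.ext_ring (h l)

theorem hom_ext₂ {f g : WordSpace R X →ₗ[R] WordSpace R X →ₗ[R] M}
    (h : ∀ l m, f (word R l) (word R m) = g (word R l) (word R m)) : f = g :=
  hom_ext fun l => hom_ext (h l)

theorem hom_ext_snoc {f g : WordSpace R X →ₗ[R] M} (nil : f (word R []) = g (word R []))
    (snoc : ∀ c h, f (snoc c h) = g (snoc c h)) : f = g := by
  refine hom_ext fun l => ?_
  rcases List.eq_nil_or_concat' l with rfl | ⟨l, c, rfl⟩
  · exact nil
  · simpa only [snoc_word] using snoc c (word R l)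

@[simp]
theorem snoc_apply_nil (c : X) (f : WordSpace R X) : snoc c f [] = 0 := by
  suffices Finsupp.lapply [] ∘ₗ snoc c = (0 : WordSpace R X →ₗ[R] R) from LinearMap.congr_fun this f
  ext l : 2
  simp [snoc_word]

/-- The coefficients of the words ending in a given letter, with that letter removed. -/
noncomputable def deconcat (c : X) : WordSpace R X →ₗ[R] WordSpace R X :=
  Finsupp.lcomapDomain (· ++ [c]) (List.append_left_injective [c])

theorem deconcat_apply (c : X) (f : WordSpace R X) (l : List X) :
    deconcat c f l = f (l ++ [c]) := rfl

@[simp]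
theorem deconcat_word_nil (c : X) : deconcat c (word R []) = 0 := by
  ext l
  simp [deconcat_apply]

@[simp]
theorem deconcat_snoc_self (c : X) (f : WordSpace R X) : deconcat c (snoc c f) = f := by
  suffices deconcat c ∘ₗ snoc c = LinearMap.id (R := R) from LinearMap.congr_fun this f
  classical
  refine hom_ext fun l => Finsupp.ext fun m => ?_
  simp [snoc_word, deconcat_apply, word, Finsupp.single_apply]

@[simp]
theorem deconcat_snoc_of_ne {c d : X} (h : d ≠ c) (f : WordSpace R X) :
    deconcat d (snoc c f) = 0 := by
  suffices deconcat d ∘ₗ snoc c = (0 : WordSpace R X →ₗ[R] _) from LinearMap.congr_fun this f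
  refine hom_ext fun l => Finsupp.ext fun m => ?_
  simp [snoc_word, deconcat_apply, h.symm]

/-- The linear map killing the empty word and sending `snoc c f` to `T c f`. -/
noncomputable def snocLift (T : X → WordSpace R X →ₗ[R] M) : WordSpace R X →ₗ[R] M :=
  Finsupp.linearCombination R fun l => match l.getLast? with
    | none => 0
    | some c => T c (word R l.dropLast)

@[simp]
theorem snocLift_nil (T : X → WordSpace R X →ₗ[R] M) : snocLift T (word R []) = 0 := by
  simp [snocLift]

@[simp]
theorem snocLift_snoc (T : X → WordSpace R X →ₗ[R] M) (c : X) (f : WordSpace R X) :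
    snocLift T (snoc c f) = T c f := by
  suffices snocLift T ∘ₗ snoc c = T c from LinearMap.congr_fun this f
  ext l : 2
  simp [snoc_word, snocLift]

/-- The orbit map of `m` under the action of words through the operators `T c`, the first letter
acting first. -/
noncomputable def wordAction (T : X → M →ₗ[R] M) (m : M) : WordSpace R X →ₗ[R] M :=
  Finsupp.linearCombination R fun l => l.foldl (fun n c => T c n) m

@[simp]
theorem wordAction_nil (T : X → M →ₗ[R] M) (m : M) : wordAction T m (word R []) = m := by
  simp [wordAction]

@[simp]
theorem wordAction_snoc (T : X → M →ₗ[R] M) (m : M) (c : X) (f : WordSpace R X) :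
    wordAction T m (snoc c f) = T c (wordAction T m f) := by
  suffices wordAction T m ∘ₗ snoc c = T c ∘ₗ wordAction T m from LinearMap.congr_fun this f
  ext l : 2
  simp [snoc_word, wordAction]

theorem eq_wordAction {F : WordSpace R X →ₗ[R] M} {T : X → M →ₗ[R] M} {m : M}
    (nil : F (word R []) = m) (snoc : ∀ c f, F (snoc c f) = T c (F f)) : F = wordAction T m := by
  refine hom_ext fun l => ?_
  induction l using List.reverseRecOn with
  | nil => rw [nil, wordAction_nil]
  | append_singleton l c ih => rw [← snoc_word, snoc, wordAction_snoc, ih]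

section Shuffle

variable {R : Type*} [CommSemiring R] {X : Type}

/-- The shuffle product, extended bilinearly from words. -/
noncomputable def shuffle : WordSpace R X →ₗ[R] WordSpace R X →ₗ[R] WordSpace R X :=
  Finsupp.linearCombination R fun u => Finsupp.linearCombination R fun v =>
    ((shuffles u v).map (word R)).sum

scoped infix:70 " ⧢ " => shuffle

theorem word_shuffle_word (u v : List X) :
    word R u ⧢ word R v = ((shuffles u v).map (word R)).sum := by
  simp [shuffle]

@[simp]
theorem nil_shuffle (f : WordSpace R X) : word R [] ⧢ f = f := by
  suffices shuffle (word R []) = LinearMap.id from LinearMap.congr_fun this f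
  ext l : 2
  simp [word_shuffle_word, shuffles]

@[simp]
theorem shuffle_nil (f : WordSpace R X) : f ⧢ word R [] = f := by
  suffices shuffle.flip (word R []) = LinearMap.id from LinearMap.congr_fun this f
  refine hom_ext fun l => ?_
  cases l <;> simp [word_shuffle_word, shuffles]

theorem cons_shuffle_cons (a b : X) (f g : WordSpace R X) :
    cons a f ⧢ cons b g = cons a (f ⧢ cons b g) + cons b (cons a f ⧢ g) := by
  suffices shuffle.compl₁₂ (cons a) (cons b) =
      (shuffle.compl₁₂ .id (cons b)).compr₂ (cons a) +
        (shuffle.compl₁₂ (cons a) .id).compr₂ (cons b) from LinearMap.congr_fun₂ this f g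
  refine hom_ext₂ fun u v => ?_
  simp [cons_word, word_shuffle_word, shuffles, map_list_sum, Function.comp_def]

theorem shuffle_comm (f g : WordSpace R X) : f ⧢ g = g ⧢ f := by
  suffices shuffle = shuffle.flip from LinearMap.congr_fun₂ this f g
  refine hom_ext₂ fun u v => ?_
  rw [LinearMap.flip_apply]
  induction u generalizing v with
  | nil => simp
  | cons a u ihu =>
    induction v with
    | nil => simp
    | cons b v ihv =>
      simp only [← cons_word] at ihu ihv ⊢
      rw [cons_shuffle_cons, cons_shuffle_cons, ihv, cons_word b v, ihu, add_comm]

theorem word_shuffle_assoc (u v w : List X) :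
    (word R u ⧢ word R v) ⧢ word R w = word R u ⧢ (word R v ⧢ word R w) := by
  induction u generalizing v w with
  | nil => simp
  | cons a u ihu =>
    induction v generalizing w with
    | nil => simp
    | cons b v ihv =>
      induction w with
      | nil => simp
      | cons c w ihw =>
        have hu := ihu (b :: v) (c :: w)
        have hv := ihv (c :: w)
        simp only [← cons_word, cons_shuffle_cons, map_add, LinearMap.add_apply] at hu hv ihw ⊢
        rw [hu, hv, ← add_assoc, ← ihw]
        simp only [map_add]
        abel

theorem shuffle_assoc (f g h : WordSpace R X) : (f ⧢ g) ⧢ h = f ⧢ (g ⧢ h) := by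
  suffices shuffle.compr₂ shuffle =
      (LinearMap.llcomp R _ _ _ ∘ₗ shuffle).compl₂ shuffle from
    LinearMap.congr_fun (LinearMap.congr_fun₂ this f g) h
  exact hom_ext₂ fun u v => hom_ext fun w => word_shuffle_assoc u v w

theorem snoc_word_shuffle_snoc_word (a b : X) (u v : List X) :
    snoc a (word R u) ⧢ snoc b (word R v) =
      snoc a (word R u ⧢ snoc b (word R v)) + snoc b (snoc a (word R u) ⧢ word R v) := by
  have snoc_nil (c : X) : snoc c (word R []) = cons c (word R []) := by
    simp [snoc_word, cons_word]
  induction u generalizing v with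
  | nil =>
    induction v with
    | nil => simp [snoc_nil, cons_shuffle_cons, snoc_cons, add_comm]
    | cons d v ihv =>
      simp only [← cons_word, snoc_cons, snoc_nil, cons_shuffle_cons, nil_shuffle, map_add]
        at ihv ⊢
      simp only [ihv, map_add]
      abel
  | cons c u ihu =>
    induction v with
    | nil =>
      specialize ihu []
      simp only [← cons_word, snoc_cons, snoc_nil, cons_shuffle_cons, shuffle_nil, map_add]
        at ihu ⊢
      simp only [ihu, map_add]
      abel
    | cons d v ihv =>
      specialize ihu (d :: v)
      simp only [← cons_word, snoc_cons, cons_shuffle_cons, map_add] at ihu ihv ⊢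
      simp only [ihu, ihv, map_add]
      abel

theorem snoc_shuffle_snoc (a b : X) (f g : WordSpace R X) :
    snoc a f ⧢ snoc b g = snoc a (f ⧢ snoc b g) + snoc b (snoc a f ⧢ g) := by
  suffices shuffle.compl₁₂ (snoc a) (snoc b) =
      (shuffle.compl₁₂ .id (snoc b)).compr₂ (snoc a) +
        (shuffle.compl₁₂ (snoc a) .id).compr₂ (snoc b) from LinearMap.congr_fun₂ this f g
  exact hom_ext₂ fun u v => snoc_word_shuffle_snoc_word a b u v

/-- The Zinbiel product `f ≺ g`, which shuffles `f` with `g` keeping the last letter of `g` last;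
it kills the empty word on the right. -/
noncomputable def halfShuffle : WordSpace R X →ₗ[R] WordSpace R X →ₗ[R] WordSpace R X :=
  (snocLift fun c => shuffle.flip.compr₂ (snoc c)).flip

scoped infix:70 " ≺ " => halfShuffle

@[simp]
theorem halfShuffle_nil (f : WordSpace R X) : f ≺ word R [] = 0 := by simp [halfShuffle]

@[simp]
theorem halfShuffle_snoc (f : WordSpace R X) (c : X) (g : WordSpace R X) :
    f ≺ snoc c g = snoc c (f ⧢ g) := by
  simp [halfShuffle]

theorem halfShuffle_add_halfShuffle {f : WordSpace R X} (hf : f [] = 0) (g : WordSpace R X) :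
    f ≺ g + g ≺ f = f ⧢ g := by
  have h (f : WordSpace R X) : f ≺ g + g ≺ f + (f [] * g []) • word R [] = f ⧢ g := by
    suffices halfShuffle + halfShuffle.flip + ((LinearMap.mul R R).compl₁₂ (Finsupp.lapply [])
        (Finsupp.lapply [])).compr₂ (LinearMap.toSpanSingleton R _ (word R [])) =
        shuffle (X := X) from LinearMap.congr_fun₂ this f g
    refine hom_ext_snoc (hom_ext_snoc ?_ fun d k => ?_) fun c h =>
      hom_ext_snoc ?_ fun d k => ?_
    · simp
    · simp
    · simp
    · simp [snoc_shuffle_snoc, shuffle_comm h, add_comm]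
  simpa [hf] using h f

theorem halfShuffle_halfShuffle {f : WordSpace R X} (hf : f [] = 0) (g h : WordSpace R X) :
    f ≺ (g ≺ h) = (f ≺ g + g ≺ f) ≺ h := by
  rw [halfShuffle_add_halfShuffle hf]
  suffices halfShuffle f ∘ₗ halfShuffle g = halfShuffle (f ⧢ g) from LinearMap.congr_fun this h
  exact hom_ext_snoc (by simp) (by simp [shuffle_assoc])

end Shuffle

section Bracket

variable {R : Type*} [CommRing R] {X : Type}

/-- The operator `[·, g]`, where `[f, g] = f ≺ g - g ≺ f`. -/
noncomputable def bracketRight (g : WordSpace R X) : WordSpace R X →ₗ[R] WordSpace R X :=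
  halfShuffle.flip g - halfShuffle g

theorem bracketRight_apply (f g : WordSpace R X) : bracketRight g f = f ≺ g - g ≺ f := rfl

/-- The shuffle product with a letter. -/
noncomputable abbrev letterShuffle (c : X) : WordSpace R X →ₗ[R] WordSpace R X :=
  shuffle (word R [c])

theorem letterShuffle_snoc (c d : X) (f : WordSpace R X) :
    letterShuffle c (snoc d f) = snoc c (snoc d f) + snoc d (letterShuffle c f) := by
  rw [letterShuffle, ← List.nil_append [c], ← snoc_word, snoc_shuffle_snoc, nil_shuffle]

theorem letterShuffle_comm (c d : X) (f : WordSpace R X) :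
    letterShuffle c (letterShuffle d f) = letterShuffle d (letterShuffle c f) := by
  rw [← shuffle_assoc, shuffle_comm (word R [c]), shuffle_assoc]

@[simp]
theorem letterShuffle_apply_nil (c : X) (f : WordSpace R X) : letterShuffle c f [] = 0 := by
  suffices Finsupp.lapply [] ∘ₗ letterShuffle c = (0 : WordSpace R X →ₗ[R] R) from
    LinearMap.congr_fun this f
  exact hom_ext_snoc (by simp) (by simp [letterShuffle_snoc])

/-- The operator taking the last letter of a word and shuffling it back in (the random-to-bottom
shuffle, up to inversion and normalisation). -/
noncomputable def reinsertLast : WordSpace R X →ₗ[R] WordSpace R X :=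
  snocLift letterShuffle

@[simp]
theorem reinsertLast_nil : reinsertLast (word R ([] : List X)) = 0 := snocLift_nil _

@[simp]
theorem reinsertLast_snoc (c : X) (f : WordSpace R X) :
    reinsertLast (snoc c f) = letterShuffle c f :=
  snocLift_snoc _ c f

@[simp]
theorem reinsertLast_apply_nil (f : WordSpace R X) : reinsertLast f [] = 0 := by
  suffices Finsupp.lapply [] ∘ₗ reinsertLast = (0 : WordSpace R X →ₗ[R] R) from
    LinearMap.congr_fun this f
  exact hom_ext_snoc (by simp) (by simp)

theorem reinsertLast_letterShuffle (c : X) (f : WordSpace R X) :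
    reinsertLast (letterShuffle c f) = letterShuffle c f + letterShuffle c (reinsertLast f) := by
  suffices reinsertLast ∘ₗ letterShuffle c =
      letterShuffle c + letterShuffle c ∘ₗ reinsertLast (R := R) from LinearMap.congr_fun this f
  refine hom_ext_snoc ?_ fun d h => ?_
  · simp [word_singleton]
  · simp [letterShuffle_snoc, letterShuffle_comm d]

/-- The operator turning right multiplication by a letter in the free Tortkara algebra into an
operation on words; see `bracketRight_skewPair_right`. -/
noncomputable def twist : WordSpace R X →ₗ[R] WordSpace R X :=
  wordAction (fun c => -(snoc c + letterShuffle c)) (word R [])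

/-- The words `w ++ [a, b]` and `w ++ [b, a]` with opposite signs: the skew elements of length at
least two. -/
noncomputable def skewPair (a b : X) : WordSpace R X →ₗ[R] WordSpace R X :=
  snoc b ∘ₗ snoc a - snoc a ∘ₗ snoc b

theorem skewPair_apply (a b : X) (f : WordSpace R X) :
    skewPair a b f = snoc b (snoc a f) - snoc a (snoc b f) := rfl

theorem skewPair_swap (a b : X) (f : WordSpace R X) : skewPair b a f = -skewPair a b f := by
  simp [skewPair_apply]

theorem bracketRight_letter (a b : X) :
    bracketRight (word R [b]) (word R [a]) = skewPair a b (word R []) := by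
  simp [bracketRight_apply, skewPair_apply, word_singleton]

theorem bracketRight_skewPair_right (a b : X) (f : WordSpace R X) :
    bracketRight (word R [b]) (skewPair a b f) =
      skewPair a b (-(snoc b f + letterShuffle b f)) := by
  have left : skewPair a b f ≺ word R [b] = snoc b (skewPair a b f) := by
    rw [word_singleton, halfShuffle_snoc, shuffle_nil]
  rw [bracketRight_apply, left]
  simp only [skewPair_apply, map_sub, halfShuffle_snoc, letterShuffle_snoc, map_add, map_neg]
  abel

theorem bracketRight_skewPair_left (a b : X) (f : WordSpace R X) :
    bracketRight (word R [a]) (skewPair a b f) =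
      skewPair a b (-(snoc a f + letterShuffle a f)) := by
  have := bracketRight_skewPair_right b a f
  rwa [skewPair_swap, skewPair_swap a b, map_neg, neg_inj] at this

theorem smul_word_add_smul_word_add_skewPair_eq_zero {a b : X} (hab : a ≠ b) {r s : R}
    {f : WordSpace R X} (h : r • word R [a] + s • word R [b] + skewPair a b f = 0) :
    r = 0 ∧ s = 0 ∧ f = 0 := by
  have skewPair_letter (c : X) : skewPair a b f [c] = 0 := by
    rw [← List.nil_append [c], ← deconcat_apply, skewPair_apply, map_sub]
    rcases eq_or_ne c a with rfl | hca
    · simp [hab]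
    · rcases eq_or_ne c b with rfl | hcb <;> simp [*]
  have hr : r = 0 := by simpa [skewPair_letter, hab.symm] using DFunLike.congr_fun h [a]
  have hs : s = 0 := by simpa [skewPair_letter, hab] using DFunLike.congr_fun h [b]
  refine ⟨hr, hs, ?_⟩
  simpa [hr, hs, skewPair_apply, hab, hab.symm] using
    congrArg (fun g => deconcat a (deconcat b g)) h

/-- `twist` applied to all letters of a word but the last, and killing the empty word. -/
noncomputable def twistInit : WordSpace R X →ₗ[R] WordSpace R X :=
  snocLift fun c => snoc c ∘ₗ twist

@[simp]
theorem twistInit_apply_nil (f : WordSpace R X) : twistInit f [] = 0 := by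
  suffices Finsupp.lapply [] ∘ₗ twistInit = (0 : WordSpace R X →ₗ[R] R) from
    LinearMap.congr_fun this f
  exact hom_ext_snoc (by simp [twistInit]) (by simp [twistInit])

theorem deconcat_twistInit (c : X) (f : WordSpace R X) :
    deconcat c (twistInit f) = twist (deconcat c f) := by
  suffices deconcat c ∘ₗ twistInit = twist ∘ₗ deconcat c (R := R) from LinearMap.congr_fun this f
  refine hom_ext_snoc (by simp [twistInit]) fun d h => ?_
  rcases eq_or_ne c d with rfl | hcd
  · simp [twistInit]
  · simp [twistInit, hcd]

theorem twist_eq (f : WordSpace R X) :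
    twist f = f [] • word R [] - (twistInit f + reinsertLast (twistInit f)) := by
  suffices twist = LinearMap.toSpanSingleton R _ (word R []) ∘ₗ Finsupp.lapply [] -
      (twistInit + reinsertLast ∘ₗ twistInit (R := R) (X := X)) from LinearMap.congr_fun this f
  refine hom_ext_snoc ?_ fun c h => ?_
  · simp [twist, twistInit]
  · simp [twist, twistInit]

end Bracket

section Eigenvalues

variable {K : Type*} [Field K] {X : Type}

open Polynomial

/-- `reinsertLast` as an element of the endomorphism algebra, where polynomials in it make sense. -/
noncomputable abbrev reinsertLastEnd (K : Type*) [Field K] (X : Type) :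
    Module.End K (WordSpace K X) :=
  reinsertLast

theorem aeval_reinsertLast_sub_one_letterShuffle (p : K[X]) (c : X) (f : WordSpace K X) :
    aeval (reinsertLastEnd K X - 1) p (letterShuffle c f) =
      letterShuffle c (aeval (reinsertLastEnd K X) p f) := by
  induction p using Polynomial.induction_on' generalizing f with
  | add p q hp hq => simp [hp, hq]
  | monomial n a =>
    induction n generalizing f with
    | zero => simp [Algebra.algebraMap_eq_smul_one]
    | succ n ih =>
      rw [← monomial_mul_X, map_mul, map_mul, Module.End.mul_apply, Module.End.mul_apply, aeval_X,
        aeval_X, ← ih]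
      simp [reinsertLast_letterShuffle]

theorem aeval_reinsertLast_descPochhammer_word {l : List X} {n : ℕ} (h : l.length < n) :
    aeval (reinsertLastEnd K X) (descPochhammer K n) (word K l) = 0 := by
  induction l using List.reverseRecOn generalizing n with
  | nil =>
    obtain ⟨n, rfl⟩ := Nat.exists_eq_succ_of_ne_zero h.ne_bot
    simp [descPochhammer_succ_left, mul_comm Polynomial.X]
  | append_singleton l c ih =>
    obtain ⟨n, rfl⟩ := Nat.exists_eq_succ_of_ne_zero h.ne_bot
    have hl : l.length < n := by simpa using h
    rw [descPochhammer_succ_left, mul_comm, map_mul, aeval_comp, Module.End.mul_apply, aeval_X,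
      ← snoc_word, reinsertLast_snoc, map_sub, aeval_X, map_one,
      aeval_reinsertLast_sub_one_letterShuffle, ih hl, map_zero]

theorem exists_aeval_reinsertLast_descPochhammer_eq_zero (f : WordSpace K X) :
    ∃ n, aeval (reinsertLastEnd K X) (descPochhammer K n) f = 0 := by
  set n := f.support.sup List.length + 1
  refine ⟨n, ?_⟩
  rw [← Finsupp.sum_single f, Finsupp.sum, map_sum]
  refine Finset.sum_eq_zero fun l hl => ?_
  rw [← Finsupp.smul_single_one, map_smul,
    aeval_reinsertLast_descPochhammer_word (Nat.lt_succ_of_le (Finset.le_sup hl)), smul_zero]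

theorem exists_nat_eq_of_hasEigenvalue_reinsertLast {μ : K}
    (h : (reinsertLastEnd K X).HasEigenvalue μ) : ∃ n : ℕ, μ = n := by
  obtain ⟨f, hf⟩ := h.exists_hasEigenvector
  obtain ⟨n, hn⟩ := exists_aeval_reinsertLast_descPochhammer_eq_zero f
  rw [Module.End.aeval_apply_of_hasEigenvector hf, smul_eq_zero_iff_left hf.2,
    descPochhammer_eval_eq_prod_range, Finset.prod_eq_zero_iff] at hn
  obtain ⟨k, -, hk⟩ := hn
  exact ⟨k, sub_eq_zero.1 hk⟩

theorem add_reinsertLast_eq_zero [CharZero K] {f : WordSpace K X} (h : f + reinsertLast f = 0) :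
    f = 0 := by
  by_contra hf
  have eigenvector : (reinsertLastEnd K X).HasEigenvector (-1) f := by
    refine ⟨Module.End.mem_eigenspace_iff.2 ?_, hf⟩
    rw [neg_one_smul, eq_neg_iff_add_eq_zero, add_comm, h]
  obtain ⟨n, hn⟩ := exists_nat_eq_of_hasEigenvalue_reinsertLast
    (Module.End.hasEigenvalue_of_hasEigenvector eigenvector)
  have : ((n + 1 : ℕ) : K) = 0 := by rw [Nat.cast_succ, ← hn, neg_add_cancel]
  exact Nat.cast_ne_zero.2 n.succ_ne_zero this

theorem twist_eq_zero [CharZero K] {f : WordSpace K X} (h : twist f = 0) : f = 0 := by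
  ext l
  induction l using List.reverseRecOn generalizing f with
  | nil => simpa [twist_eq] using DFunLike.congr_fun h []
  | append_singleton _ c ih =>
    have f_nil : f [] = 0 := by simpa [twist_eq] using DFunLike.congr_fun h []
    rw [twist_eq, f_nil, zero_smul, zero_sub, neg_eq_zero] at h
    have twistInit_eq_zero : twistInit f = 0 := add_reinsertLast_eq_zero h
    have : twist (deconcat c f) = 0 := by rw [← deconcat_twistInit, twistInit_eq_zero, map_zero]
    exact ih this

end Eigenvalues

end WordSpace

section LeftNormed

variable {K A : Type*} [CommSemiring K] [NonUnitalNonAssocSemiring A] [Module K A]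
  [SMulCommClass K A A] [IsScalarTower K A A]

/-- The span of the left-normed products of `n` elements of `E`. -/
def leftNormedSpan (E : Submodule K A) : ℕ → Submodule K A
  | 0 => ⊥
  | 1 => E
  | n + 2 => Submodule.map₂ (LinearMap.mul K A) (leftNormedSpan E (n + 1)) E

theorem mul_mem_leftNormedSpan_succ {E : Submodule K A} {n : ℕ} {u e : A}
    (hu : u ∈ leftNormedSpan E n) (he : e ∈ E) : u * e ∈ leftNormedSpan E (n + 1) := by
  match n, hu with
  | 0, hu =>
    obtain rfl : u = 0 := hu
    simp
  | n + 1, hu => exact Submodule.apply_mem_map₂ _ hu he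

theorem leftNormedSpan_le {E P : Submodule K A} {n : ℕ} :
    leftNormedSpan E (n + 2) ≤ P ↔ ∀ a ∈ leftNormedSpan E (n + 1), ∀ e ∈ E, a * e ∈ P :=
  Submodule.map₂_le

theorem mul_mem_iSup_leftNormedSpan {E : Submodule K A}
    (h : ∀ {m n : ℕ} {u v : A}, u ∈ leftNormedSpan E m → v ∈ leftNormedSpan E n →
      u * v ∈ leftNormedSpan E (m + n)) {u v : A}
    (hu : u ∈ ⨆ n, leftNormedSpan E n) (hv : v ∈ ⨆ n, leftNormedSpan E n) :
    u * v ∈ ⨆ n, leftNormedSpan E n := by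
  suffices Submodule.map₂ (LinearMap.mul K A) (⨆ n, leftNormedSpan E n) (⨆ n, leftNormedSpan E n) ≤
      ⨆ n, leftNormedSpan E n from this (Submodule.apply_mem_map₂ _ hu hv)
  simp_rw [Submodule.map₂_iSup_left, Submodule.map₂_iSup_right]
  exact iSup₂_le fun m n => Submodule.map₂_le.2 fun u hu v hv =>
    Submodule.mem_iSup_of_mem (m + n) (h hu hv)

/-- The left-normed products with first two factors `x`, `y`, indexed by the word of the remaining
factors, where the letters `0` and `1` stand for `x` and `y`. -/
noncomputable def leftNormed (K : Type*) {A : Type*} [CommSemiring K]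
    [NonUnitalNonAssocSemiring A] [Module K A] [SMulCommClass K A A] [IsScalarTower K A A]
    (x y : A) : WordSpace K (Fin 2) →ₗ[K] A :=
  WordSpace.wordAction (fun c => LinearMap.mulRight K (![x, y] c)) (x * y)

end LeftNormed

namespace TortkaraAlgebra

variable {K : Type} [Field K] {T : TortkaraAlgebra K}

theorem mul_self [NeZero (2 : K)] (a : T.carrier) : a * a = 0 := by
  have h : (2 : K) • (a * a) = 0 := by
    rw [two_smul]
    nth_rw 1 [T.anticomm, neg_add_cancel]
  exact (smul_eq_zero.1 h).resolve_left two_ne_zero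

/-- The Jacobian `J(a, b, c)`. -/
def jacobian (a b c : T.carrier) : T.carrier := a * b * c + b * c * a + c * a * b

theorem mul_mul_mul_self (a b c : T.carrier) : a * b * (c * b) = jacobian a b c * b :=
  T.tortkara a b c

theorem mul_mul_mul_add_mul_mul_mul (a b c d : T.carrier) :
    a * b * (c * d) + a * d * (c * b) = jacobian a b c * d + jacobian a d c * b := by
  have h := mul_mul_mul_self a (b + d) c
  have hb := mul_mul_mul_self a b c
  have hd := mul_mul_mul_self a d c
  simp only [jacobian, mul_add, add_mul] at h hb hd ⊢
  linear_combination (norm := abel) h - hb - hd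

/-- The left-normed spans of `E` multiply as a grading in total degree less than `N`. -/
def GradedBelow (E : Submodule K T.carrier) (N : ℕ) : Prop :=
  ∀ ⦃m n : ℕ⦄ ⦃u v : T.carrier⦄, m + n < N → u ∈ leftNormedSpan E m → v ∈ leftNormedSpan E n →
    u * v ∈ leftNormedSpan E (m + n)

theorem GradedBelow.jacobian_mem {E : Submodule K T.carrier} {N k m n : ℕ} {a b c : T.carrier}
    (h : GradedBelow E N) (hN : k + m + n < N) (ha : a ∈ leftNormedSpan E k)
    (hb : b ∈ leftNormedSpan E m) (hc : c ∈ leftNormedSpan E n) :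
    jacobian a b c ∈ leftNormedSpan E (k + m + n) := by
  have hab : a * b * c ∈ leftNormedSpan E (k + m + n) := h hN (h (by lia) ha hb) hc
  have hbc : b * c * a ∈ leftNormedSpan E (m + n + k) := h (by lia) (h (by lia) hb hc) ha
  have hca : c * a * b ∈ leftNormedSpan E (n + k + m) := h (by lia) (h (by lia) hc ha) hb
  rw [show m + n + k = k + m + n by lia] at hbc
  rw [show n + k + m = k + m + n by lia] at hca
  exact add_mem (add_mem hab hbc) hca

theorem GradedBelow.mul_mul_mul_self_mem {E : Submodule K T.carrier} {N m n : ℕ}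
    {a c e : T.carrier} (h : GradedBelow E N) (hN : m + 1 + n < N) (ha : a ∈ leftNormedSpan E m)
    (he : e ∈ E) (hc : c ∈ leftNormedSpan E n) :
    a * e * (c * e) ∈ leftNormedSpan E (m + 1 + n + 1) := by
  rw [mul_mul_mul_self]
  exact mul_mem_leftNormedSpan_succ (h.jacobian_mem hN ha he hc) he

variable {x y : T.carrier}

theorem mul_mem_span_mul [NeZero (2 : K)] {d e : T.carrier} (hd : d ∈ Submodule.span K {x, y})
    (he : e ∈ Submodule.span K {x, y}) : d * e ∈ Submodule.span K {x * y} := by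
  obtain ⟨α, β, rfl⟩ := Submodule.mem_span_pair.1 hd
  obtain ⟨γ, δ, rfl⟩ := Submodule.mem_span_pair.1 he
  refine Submodule.mem_span_singleton.2 ⟨α * δ - β * γ, ?_⟩
  simp only [add_mul, mul_add, smul_mul_assoc, mul_smul_comm, mul_self, T.anticomm y x]
  module

theorem GradedBelow.mul_mul_mem [NeZero (2 : K)] {N n : ℕ} {w : T.carrier}
    (h : GradedBelow (Submodule.span K {x, y}) N) (hN : n + 1 < N)
    (hw : w ∈ leftNormedSpan (Submodule.span K {x, y}) n) :
    x * y * w ∈ leftNormedSpan (Submodule.span K {x, y}) (n + 2) := by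
  set E := Submodule.span K {x, y}
  have hx : x ∈ E := Submodule.subset_span (by simp)
  have hy : y ∈ E := Submodule.subset_span (by simp)
  match n, hw with
  | 0, hw =>
    obtain rfl : w = 0 := hw
    simp
  | 1, hw => exact mul_mem_leftNormedSpan_succ (mul_mem_leftNormedSpan_succ (n := 1) hx hy) hw
  | n + 2, hw =>
    suffices leftNormedSpan E (n + 2) ≤
      (leftNormedSpan E (n + 4)).comap (LinearMap.mulLeft K (x * y)) from this hw
    refine leftNormedSpan_le.2 fun c hc g hg => ?_
    obtain ⟨γ, δ, rfl⟩ := Submodule.mem_span_pair.1 hg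
    have hcx : x * y * (c * x) ∈ leftNormedSpan E (1 + 1 + (n + 1) + 1) := by
      rw [T.anticomm x y, neg_mul]
      exact neg_mem (h.mul_mul_mul_self_mem (by lia) hy hx hc)
    have hcy : x * y * (c * y) ∈ leftNormedSpan E (1 + 1 + (n + 1) + 1) :=
      h.mul_mul_mul_self_mem (by lia) hx hy hc
    rw [show 1 + 1 + (n + 1) + 1 = n + 4 by lia] at hcx hcy
    simpa [mul_add, mul_smul_comm] using
      add_mem (Submodule.smul_mem _ γ hcx) (Submodule.smul_mem _ δ hcy)

theorem mul_mul_mul_eq (a c d e : T.carrier) :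
    a * e * (c * d) = e * d * (c * a) - jacobian e a c * d + a * jacobian e d c := by
  have := mul_mul_mul_add_mul_mul_mul e a c d
  rw [T.anticomm a e, T.anticomm a (jacobian e d c)]
  linear_combination (norm := noncomm_ring) -this

theorem GradedBelow.mul_mul_mul_mem [NeZero (2 : K)] {m n : ℕ} {a c d e : T.carrier} (hm : 0 < m)
    (h : GradedBelow (Submodule.span K {x, y}) (m + n + 2))
    (mul_mem : ∀ v ∈ leftNormedSpan (Submodule.span K {x, y}) (n + 2),
      a * v ∈ leftNormedSpan (Submodule.span K {x, y}) (m + n + 2))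
    (ha : a ∈ leftNormedSpan (Submodule.span K {x, y}) m) (he : e ∈ Submodule.span K {x, y})
    (hc : c ∈ leftNormedSpan (Submodule.span K {x, y}) n) (hd : d ∈ Submodule.span K {x, y}) :
    a * e * (c * d) ∈ leftNormedSpan (Submodule.span K {x, y}) (m + n + 2) := by
  set E := Submodule.span K {x, y}
  have hedca : e * d * (c * a) ∈ leftNormedSpan E (m + n + 2) := by
    obtain ⟨r, hr⟩ := Submodule.mem_span_singleton.1 (mul_mem_span_mul he hd)
    rw [← hr, smul_mul_assoc]
    have hca : c * a ∈ leftNormedSpan E (m + n) := add_comm m n ▸ h (by lia) hc ha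
    exact Submodule.smul_mem _ r (h.mul_mul_mem (by lia) hca)
  have heac : jacobian e a c ∈ leftNormedSpan E (m + n + 1) := by
    rw [add_right_comm, add_comm m 1]
    exact h.jacobian_mem (by lia) he ha hc
  have hedc : jacobian e d c ∈ leftNormedSpan E (1 + 1 + n) :=
    h.jacobian_mem (by lia) he hd hc
  rw [add_comm] at hedc
  rw [mul_mul_mul_eq]
  exact add_mem (sub_mem hedca (mul_mem_leftNormedSpan_succ heac hd)) (mul_mem _ hedc)

theorem GradedBelow.mul_mem [NeZero (2 : K)] {m n : ℕ} {u v : T.carrier}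
    (h : GradedBelow (Submodule.span K {x, y}) (m + n))
    (hu : u ∈ leftNormedSpan (Submodule.span K {x, y}) m)
    (hv : v ∈ leftNormedSpan (Submodule.span K {x, y}) n) :
    u * v ∈ leftNormedSpan (Submodule.span K {x, y}) (m + n) := by
  set E := Submodule.span K {x, y}
  induction m using Nat.strongRecOn generalizing n u v with | ind m ih =>
  match m, n, hu, hv with
  | 0, n, hu, _ =>
    obtain rfl : u = 0 := hu
    simp
  | m, 0, _, hv =>
    obtain rfl : v = 0 := hv
    simp
  | 1, n, hu, hv =>
    rw [T.anticomm, add_comm]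
    exact neg_mem (mul_mem_leftNormedSpan_succ hv hu)
  | m, 1, hu, hv => exact mul_mem_leftNormedSpan_succ hu hv
  | m + 2, n + 2, hu, hv =>
    rw [show m + 2 + (n + 2) = (m + 1) + (n + 1) + 2 by lia] at h ⊢
    suffices leftNormedSpan E (m + 2) ≤
      (leftNormedSpan E (m + 1 + (n + 1) + 2)).comap (LinearMap.mulRight K v) from this hu
    refine leftNormedSpan_le.2 fun a ha e he => ?_
    suffices leftNormedSpan E (n + 2) ≤
      (leftNormedSpan E (m + 1 + (n + 1) + 2)).comap (LinearMap.mulLeft K (a * e)) from this hv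
    refine leftNormedSpan_le.2 fun c hc d hd => ?_
    exact h.mul_mul_mul_mem m.succ_pos (fun v hv => ih (m + 1) (by lia) h ha hv) ha he hc hd

theorem mul_mem_leftNormedSpan [NeZero (2 : K)] {m n : ℕ} {u v : T.carrier}
    (hu : u ∈ leftNormedSpan (Submodule.span K {x, y}) m)
    (hv : v ∈ leftNormedSpan (Submodule.span K {x, y}) n) :
    u * v ∈ leftNormedSpan (Submodule.span K {x, y}) (m + n) := by
  have gradedBelow (N : ℕ) : GradedBelow (Submodule.span K {x, y}) N := by
    induction N with
    | zero => exact fun m n u v hN => absurd hN (Nat.not_lt_zero _)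
    | succ N ih =>
      intro m n u v hN hu hv
      exact GradedBelow.mul_mem (fun _ _ _ _ h => ih (h.trans_le (Nat.le_of_lt_succ hN))) hu hv
  exact gradedBelow (m + n + 1) (Nat.lt_succ_self _) hu hv

theorem adjoin_le_iSup_leftNormedSpan [NeZero (2 : K)] :
    (NonUnitalAlgebra.adjoin K {x, y}).toSubmodule ≤
      ⨆ n, leftNormedSpan (Submodule.span K {x, y}) n := by
  let S : NonUnitalSubalgebra K T.carrier :=
    { (⨆ n, leftNormedSpan (Submodule.span K {x, y}) n : Submodule K T.carrier) with
      mul_mem' := mul_mem_iSup_leftNormedSpan mul_mem_leftNormedSpan }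
  suffices {x, y} ⊆ (S : Set T.carrier) from NonUnitalAlgebra.adjoin_le this
  exact fun z hz => Submodule.mem_iSup_of_mem 1 (Submodule.subset_span hz)

theorem leftNormedSpan_le_range_leftNormed [NeZero (2 : K)] (n : ℕ) :
    leftNormedSpan (Submodule.span K {x, y}) (n + 2) ≤ LinearMap.range (leftNormed K x y) := by
  refine leftNormedSpan_le.2 fun a ha e he => ?_
  induction n generalizing a e with
  | zero =>
    have : x * y ∈ LinearMap.range (leftNormed K x y) := ⟨_, WordSpace.wordAction_nil _ _⟩
    exact (Submodule.span_singleton_le_iff_mem _ _).2 this (mul_mem_span_mul ha he)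
  | succ n ih =>
    obtain ⟨f, rfl⟩ := leftNormedSpan_le.2 ih ha
    obtain ⟨α, β, rfl⟩ := Submodule.mem_span_pair.1 he
    refine ⟨α • WordSpace.snoc 0 f + β • WordSpace.snoc 1 f, ?_⟩
    simp [leftNormed, mul_add, mul_smul_comm]

theorem exists_eq_add_leftNormed [NeZero (2 : K)] (h : NonUnitalAlgebra.adjoin K {x, y} = ⊤)
    (t : T.carrier) : ∃ (α β : K) (f : WordSpace K (Fin 2)),
      t = α • x + β • y + leftNormed K x y f := by
  have iSup_le : ⨆ n, leftNormedSpan (Submodule.span K {x, y}) n ≤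
      Submodule.span K {x, y} ⊔ LinearMap.range (leftNormed K x y) := by
    refine iSup_le fun n => ?_
    match n with
    | 0 => exact bot_le
    | 1 => exact le_sup_left
    | n + 2 => exact (leftNormedSpan_le_range_leftNormed n).trans le_sup_right
  have ht : t ∈ NonUnitalAlgebra.adjoin K {x, y} := h ▸ NonUnitalAlgebra.mem_top
  obtain ⟨z, hz, _, ⟨f, rfl⟩, rfl⟩ :=
    Submodule.mem_sup.1 (iSup_le (adjoin_le_iSup_leftNormedSpan ht))
  obtain ⟨α, β, rfl⟩ := Submodule.mem_span_pair.1 hz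
  exact ⟨α, β, f, rfl⟩

end TortkaraAlgebra

namespace Zin

open WordSpace

variable {K X : Type} [Field K]

/-- The inclusion of the free Zinbiel algebra into the space of all words. -/
noncomputable def toWordSpace : Zin K X →ₗ[K] WordSpace K X :=
  Finsupp.lmapDomain K K fun u : Word X => u.1

theorem toWordSpace_injective : Function.Injective (toWordSpace (K := K) (X := X)) :=
  Finsupp.mapDomain_injective fun _ _ => Subtype.ext

theorem toWordSpace_single (u : Word X) (c : K) :
    toWordSpace (Finsupp.single u c) = c • word K u.1 := by
  simp [toWordSpace]

theorem toWordSpace_ofLetter (x : X) :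
    toWordSpace (ofLetter x : Zin K X) = word K [x] := by
  exact (toWordSpace_single _ 1).trans (one_smul _ _)

theorem toWordSpace_ofList {l : List X} (hl : l ≠ []) :
    toWordSpace (ofList l : Zin K X) = word K l := by
  match l, hl with
  | a :: t, _ => exact (toWordSpace_single _ 1).trans (one_smul _ _)

theorem toWordSpace_apply_nil (f : Zin K X) : toWordSpace f [] = 0 :=
  Finsupp.mapDomain_of_notMem_range _ _ fun ⟨u, hu⟩ => u.2 hu

theorem toWordSpace_eq_sum (f : Zin K X) :
    toWordSpace f = f.sum fun u c => c • word K u.1 := by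
  simp [toWordSpace, Finsupp.mapDomain]

theorem word_halfShuffle_word (u w : Word X) :
    word K u.1 ≺ word K w.1 =
      toWordSpace (ofLists ((shuffles u.1 w.1.dropLast).map fun s => s ++ [w.1.getLast w.2])) := by
  conv_lhs =>
    rw [← List.dropLast_append_getLast w.2, ← snoc_word, halfShuffle_snoc, word_shuffle_word]
  simp only [ofLists, map_list_sum, List.map_map, Function.comp_def, snoc_word,
    toWordSpace_ofList (List.append_ne_nil_of_right_ne_nil _ (List.cons_ne_nil _ []))]

theorem toWordSpace_zmul (f g : Zin K X) :
    toWordSpace (zmul f g) = toWordSpace f ≺ toWordSpace g := by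
  rw [toWordSpace_eq_sum f, toWordSpace_eq_sum g]
  simp only [zmul, Finsupp.sum, map_sum, LinearMap.sum_apply, map_smul, LinearMap.smul_apply,
    word_halfShuffle_word, mul_smul, Finset.smul_sum]
  rw [Finset.sum_comm]
  exact Finset.sum_congr rfl fun _ _ => Finset.sum_congr rfl fun _ _ => smul_comm _ _ _

theorem toWordSpace_zbracket (f g : Zin K X) :
    toWordSpace (zbracket f g) = bracketRight (toWordSpace g) (toWordSpace f) := by
  rw [zbracket, map_sub, toWordSpace_zmul, toWordSpace_zmul, bracketRight_apply]

variable (K X) in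
/-- The Zinbiel product `zmul` as a bilinear map. -/
noncomputable def zmulBilin : Zin K X →ₗ[K] Zin K X →ₗ[K] Zin K X :=
  LinearMap.mk₂ K zmul
    (fun _ _ _ => toWordSpace_injective (by simp [toWordSpace_zmul]))
    (fun _ _ _ => toWordSpace_injective (by simp [toWordSpace_zmul]))
    (fun _ _ _ => toWordSpace_injective (by simp [toWordSpace_zmul]))
    (fun _ _ _ => toWordSpace_injective (by simp [toWordSpace_zmul]))

theorem zmul_zmul (f g h : Zin K X) : zmul f (zmul g h) = zmul (zmul f g + zmul g f) h :=
  toWordSpace_injective <| by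
    simp [toWordSpace_zmul, halfShuffle_halfShuffle (toWordSpace_apply_nil f)]

end Zin

/-- The nonassociative ring structure whose product is a given bilinear map. -/
abbrev ringOfBilin {K A : Type*} [CommRing K] [AddCommGroup A] [Module K A]
    (μ : A →ₗ[K] A →ₗ[K] A) : NonUnitalNonAssocRing A where
  mul a b := μ a b
  left_distrib a := map_add (μ a)
  right_distrib := μ.map_add₂
  zero_mul := μ.map_zero₂
  mul_zero a := map_zero (μ a)

/-- The Zinbiel algebra whose product is a given bilinear map. -/
def ZinbielAlgebra.ofBilin {K A : Type} [Field K] [AddCommGroup A] [Module K A]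
    (μ : A →ₗ[K] A →ₗ[K] A) (zinbiel : ∀ a b c, μ a (μ b c) = μ (μ a b + μ b a) c) :
    ZinbielAlgebra K :=
  letI := ringOfBilin μ
  { carrier := A
    smulComm := ⟨fun c a b => ((μ a).map_smul c b).symm⟩
    tower := ⟨μ.map_smul₂⟩
    zinbiel }

/-- The Tortkara algebra whose product is a given bilinear map. -/
def TortkaraAlgebra.ofBilin {K A : Type} [Field K] [AddCommGroup A] [Module K A]
    (μ : A →ₗ[K] A →ₗ[K] A) (anticomm : ∀ a b, μ a b = -μ b a)
    (tortkara : ∀ a b c, μ (μ a b) (μ c b) = μ (μ (μ a b) c + μ (μ b c) a + μ (μ c a) b) b) :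
    TortkaraAlgebra K :=
  letI := ringOfBilin μ
  { carrier := A
    smulComm := ⟨fun c a b => ((μ a).map_smul c b).symm⟩
    tower := ⟨μ.map_smul₂⟩
    anticomm
    tortkara }

/-- The free Zinbiel algebra on `X`, with product `zmul`. -/
noncomputable def freeZinbiel (K X : Type) [Field K] : ZinbielAlgebra K :=
  .ofBilin (Zin.zmulBilin K X) Zin.zmul_zmul

/-- The Tortkara algebra `A^(-)` with product `a * b - b * a`. -/
noncomputable def ZinbielAlgebra.minus {K : Type} [Field K] (A : ZinbielAlgebra K) :
    TortkaraAlgebra K :=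
  .ofBilin (LinearMap.mul K A.carrier - (LinearMap.mul K A.carrier).flip)
    (fun a b => by simp) fun a b c => by
      simp only [LinearMap.sub_apply, LinearMap.flip_apply, LinearMap.mul_apply', map_sub,
        map_add, LinearMap.add_apply, A.zinbiel, add_mul]
      abel

theorem TortkaraAlgebra.adjoin_eq_top_of_existsUnique {K : Type} [Field K] {T : TortkaraAlgebra K}
    {x y : T.carrier}
    (hfree : ∀ (S : TortkaraAlgebra K) (s t : S.carrier),
      ∃! φ : T.carrier →ₙₐ[K] S.carrier, φ x = s ∧ φ y = t) :
    NonUnitalAlgebra.adjoin K {x, y} = ⊤ := by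
  let P := NonUnitalAlgebra.adjoin K {x, y}
  let S : TortkaraAlgebra K :=
    { carrier := P
      anticomm := fun a b => Subtype.ext (T.anticomm a b)
      tortkara := fun a b c => Subtype.ext (T.tortkara a b c) }
  have hx : x ∈ P := NonUnitalAlgebra.subset_adjoin K (by simp)
  have hy : y ∈ P := NonUnitalAlgebra.subset_adjoin K (by simp)
  obtain ⟨φ, ⟨hφx, hφy⟩, -⟩ := hfree S ⟨x, hx⟩ ⟨y, hy⟩
  let ι : S.carrier →ₙₐ[K] T.carrier := NonUnitalSubalgebraClass.subtype P
  have retraction : ι.comp φ = NonUnitalAlgHom.id K T.carrier :=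
    (hfree T x y).unique ⟨congrArg ι hφx, congrArg ι hφy⟩ ⟨rfl, rfl⟩
  refine eq_top_iff.2 fun t _ => ?_
  have hφt : ι (φ t) = t := DFunLike.congr_fun retraction t
  rw [← hφt]
  exact (φ t).2

section Specialization

variable {K A : Type} [Field K] [NonUnitalNonAssocRing A] [Module K A] [SMulCommClass K A A]
  [IsScalarTower K A A] {x y : A} {φ : A →ₗ[K] Zin K (Fin 2)}

open WordSpace

theorem range_eq_span_inST (hgen : NonUnitalAlgebra.adjoin K {x, y} = ⊤) (hx : φ x = ofLetter 0)
    (hy : φ y = ofLetter 1) (hmul : ∀ s t, φ (s * t) = zbracket (φ s) (φ t)) :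
    LinearMap.range φ = Submodule.span K {f | InST f} := by
  apply le_antisymm
  · rintro _ ⟨t, rfl⟩
    refine Submodule.subset_span ?_
    have ht : t ∈ NonUnitalAlgebra.adjoin K {x, y} := hgen ▸ NonUnitalAlgebra.mem_top
    induction ht using NonUnitalAlgebra.adjoin_induction with
    | mem z hz =>
      rcases hz with rfl | rfl
      · exact hx ▸ .letter 0
      · exact hy ▸ .letter 1
    | add s t _ _ hs ht => exact map_add φ s t ▸ hs.add ht
    | zero => exact map_zero φ ▸ .zero
    | mul s t _ _ hs ht => exact hmul s t ▸ hs.bracket ht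
    | smul c t _ ht => exact map_smul φ c t ▸ ht.smul c
  · refine Submodule.span_le.2 fun f hf => ?_
    induction hf with
    | letter c =>
      match c with
      | 0 => exact ⟨x, hx⟩
      | 1 => exact ⟨y, hy⟩
    | zero => exact zero_mem _
    | add _ _ hf hg => exact add_mem hf hg
    | smul c _ hf => exact Submodule.smul_mem _ c hf
    | bracket _ _ hf hg =>
      obtain ⟨s, rfl⟩ := hf
      obtain ⟨t, rfl⟩ := hg
      exact ⟨s * t, hmul s t⟩

theorem toWordSpace_leftNormed (hx : φ x = ofLetter 0) (hy : φ y = ofLetter 1)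
    (hmul : ∀ s t, φ (s * t) = zbracket (φ s) (φ t)) (f : WordSpace K (Fin 2)) :
    Zin.toWordSpace (φ (leftNormed K x y f)) = skewPair 0 1 (twist f) := by
  have hletter (c : Fin 2) : Zin.toWordSpace (φ (![x, y] c)) = word K [c] := by
    match c with
    | 0 => simp [hx, Zin.toWordSpace_ofLetter]
    | 1 => simp [hy, Zin.toWordSpace_ofLetter]
  have hright (t : A) (c : Fin 2) :
      Zin.toWordSpace (φ (t * ![x, y] c)) = bracketRight (word K [c]) (Zin.toWordSpace (φ t)) := by
    rw [hmul, Zin.toWordSpace_zbracket, hletter]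
  let action := wordAction (fun c => bracketRight (word K [c])) (skewPair (0 : Fin 2) 1 (word K []))
  have hleft : Zin.toWordSpace ∘ₗ φ ∘ₗ leftNormed K x y = action := by
    refine eq_wordAction ?_ fun c f => ?_
    · simpa [leftNormed, hx, Zin.toWordSpace_ofLetter, bracketRight_letter] using hright x 1
    · simpa [leftNormed] using hright (leftNormed K x y f) c
  have htwist : skewPair 0 1 ∘ₗ twist = action := by
    refine eq_wordAction (by simp [twist]) fun c f => ?_
    match c with
    | 0 => simp [twist, bracketRight_skewPair_left]
    | 1 => simp [twist, bracketRight_skewPair_right]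
  exact LinearMap.congr_fun (hleft.trans htwist.symm) f

end Specialization

theorem TortkaraAlgebra.injective_of_adjoin_eq_top {K : Type} [Field K] [CharZero K]
    {T : TortkaraAlgebra K} {x y : T.carrier} {φ : T.carrier →ₗ[K] Zin K (Fin 2)}
    (hgen : NonUnitalAlgebra.adjoin K {x, y} = ⊤) (hx : φ x = ofLetter 0)
    (hy : φ y = ofLetter 1) (hmul : ∀ s t, φ (s * t) = zbracket (φ s) (φ t)) :
    Function.Injective φ := by
  refine (injective_iff_map_eq_zero φ).2 fun t ht => ?_
  obtain ⟨α, β, f, rfl⟩ := exists_eq_add_leftNormed hgen t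
  have h := congrArg Zin.toWordSpace ht
  simp only [map_add, map_smul, hx, hy, Zin.toWordSpace_ofLetter,
    toWordSpace_leftNormed hx hy hmul, map_zero] at h
  obtain ⟨rfl, rfl, hf⟩ :=
    WordSpace.smul_word_add_smul_word_add_skewPair_eq_zero Fin.zero_ne_one h
  simp [WordSpace.twist_eq_zero hf]

/-- The free Tortkara algebra on two generators is special: for any Tortkara algebra `T`
free on two generators `x, y` (i.e. satisfying the universal property), the natural
homomorphism `T → ST({x,y})` sending `x ↦ x`, `y ↦ y` is an isomorphism of algebras;
in particular `T` embeds into the minus-algebra of a Zinbiel algebra. -/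
theorem free_tortkara_two_generators_special (K : Type) [Field K] [CharZero K]
    (T : TortkaraAlgebra K) (x y : T.carrier)
    (hfree : ∀ (S : TortkaraAlgebra K) (s t : S.carrier),
      ∃! φ : T.carrier →ₙₐ[K] S.carrier, φ x = s ∧ φ y = t) :
    ∃ φ : T.carrier →ₗ[K] Zin K (Fin 2),
      φ x = ofLetter 0 ∧ φ y = ofLetter 1 ∧
      (∀ s t : T.carrier, φ (s * t) = zbracket (φ s) (φ t)) ∧
      Function.Injective φ ∧
      LinearMap.range φ = Submodule.span K {f : Zin K (Fin 2) | InST f} := by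
  obtain ⟨φ, ⟨hx, hy⟩, -⟩ := hfree (freeZinbiel K (Fin 2)).minus (ofLetter 0 : Zin K (Fin 2))
    (ofLetter 1 : Zin K (Fin 2))
  let φₗ : T.carrier →ₗ[K] Zin K (Fin 2) :=
    { toFun := φ, map_add' := map_add φ, map_smul' := map_smul φ }
  have hmul (s t : T.carrier) : φₗ (s * t) = zbracket (φₗ s) (φₗ t) := map_mul φ s t
  have hgen := TortkaraAlgebra.adjoin_eq_top_of_existsUnique hfree
  exact ⟨φₗ, hx, hy, hmul, TortkaraAlgebra.injective_of_adjoin_eq_top hgen hx hy hmul,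
    range_eq_span_inST hgen hx hy hmul⟩
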